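/- Let n ≥ 2 and let μ ∈ ℤⁿ be weakly decreasing with depth(μ) < 2. Let x = (w, λ) with w ∈ Sₙ and λ ∈ ℤⁿ be μ-permissible and suppose that ℓ(x, e_a − e_b) ≤ 0 for all 1 ≤ a < b ≤ n (i.e. x has minimal length in its right coset modulo the finite Weyl group, so that x lies in Adm(μ)^K for K hyperspecial). Then x is of positive Coxeter type: there exists a permutation v ∈ Sₙ that is length positive for x such that v⁻¹ w v is a product of pairwise distinct simple transpositions. -/

import Mathlib

/-- The simple transposition of `Fin n` swapping the 0-indexed positions `i` and
`i+1` (the identity if `i + 1 ≥ n`). -/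
def simpleT (n : ℕ) (i : ℕ) : Equiv.Perm (Fin n) :=
  if h : i + 1 < n then Equiv.swap ⟨i, by omega⟩ ⟨i + 1, h⟩ else 1

/-- Sum of the first `j` entries of a vector indexed by `Fin n`. -/
def psum {n : ℕ} (μ : Fin n → ℤ) (j : ℕ) : ℤ :=
  ∑ i ∈ Finset.univ.filter (fun i : Fin n => (i : ℕ) < j), μ i

/-- The depth of a weakly decreasing vector `μ ∈ ℤⁿ`, viewed as a dominant
cocharacter of `GL_n`:  `max_{1 ≤ j ≤ n-1} (μ₁+⋯+μⱼ) − (j/n)(μ₁+⋯+μₙ)`. -/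
def depth {n : ℕ} (μ : Fin n → ℤ) : ℚ :=
  if h : (Finset.Icc 1 (n - 1)).Nonempty then
    (Finset.Icc 1 (n - 1)).sup' h fun j : ℕ =>
      (psum μ j : ℚ) - (j : ℚ) / (n : ℚ) * (psum μ n : ℚ)
  else 0

/-- The length functional of `x = (w, λ)`: the value `ℓ(x, e_a − e_b)`. -/
def ellF {n : ℕ} (w : Equiv.Perm (Fin n)) (lam : Fin n → ℤ) (a b : Fin n) : ℤ :=
  lam a - lam b +
    (if a < b ∧ w b < w a then 1 else if b < a ∧ w a < w b then -1 else 0)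

/-- The vector `μ^{(i)}(x) = λ + 1_{[1..i]} − w⁻¹·1_{[1..i]}` for `x = (w, λ)`. -/
def muI {n : ℕ} (w : Equiv.Perm (Fin n)) (lam : Fin n → ℤ) (i : ℕ) : Fin n → ℤ :=
  fun a => lam a + (if (a : ℕ) < i then 1 else 0) - (if ((w a : Fin n) : ℕ) < i then 1 else 0)

/-- `x = (w, λ)` is `μ`-permissible: the entries of `λ` sum to those of `μ`, and
for every `i ∈ {1,…,n}` the weakly decreasing rearrangement `ρ` of `μ^{(i)}(x)`
satisfies `ρ₁+⋯+ρⱼ ≤ μ₁+⋯+μⱼ` for all `j`. -/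
def Permissible {n : ℕ} (μ : Fin n → ℤ) (w : Equiv.Perm (Fin n)) (lam : Fin n → ℤ) : Prop :=
  (∑ a, lam a = ∑ a, μ a) ∧
  ∀ i : ℕ, 1 ≤ i → i ≤ n →
    ∀ (ρ : Fin n → ℤ) (π : Equiv.Perm (Fin n)),
      (∀ a, ρ a = muI w lam i (π a)) → Antitone ρ →
      ∀ j : ℕ, psum ρ j ≤ psum μ j


namespace PC
open Equiv

/-- `Cox L u`: `u` is a product, in some order, of distinct swaps of consecutive entries of `L`. -/
inductive Cox {α : Type} [DecidableEq α] : List α → Perm α → Prop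
  | nil : Cox [] 1
  | single (a : α) : Cox [a] 1
  | skip (a b : α) (L : List α) (u : Perm α) : Cox (b :: L) u → Cox (a :: b :: L) u
  | left (a b : α) (L : List α) (u : Perm α) : Cox (b :: L) u → Cox (a :: b :: L) (swap a b * u)
  | right (a b : α) (L : List α) (u : Perm α) : Cox (b :: L) u → Cox (a :: b :: L) (u * swap a b)

variable {α : Type} [DecidableEq α]

theorem Cox.fix {L : List α} {u : Perm α} (h : Cox L u) : ∀ x, x ∉ L → u x = x := by
  induction h with
  | nil => simp
  | single a => simp
  | skip a b L u _ ih => intro x hx; exact ih x (fun h => hx (List.mem_cons_of_mem _ h))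
  | left a b L u _ ih =>
    intro x hx
    have h1 := ih x (fun h => hx (List.mem_cons_of_mem _ h))
    simp only [List.mem_cons, not_or] at hx
    rw [Perm.mul_apply, h1, swap_apply_of_ne_of_ne hx.1 hx.2.1]
  | right a b L u _ ih =>
    intro x hx
    have h1 := ih x (fun h => hx (List.mem_cons_of_mem _ h))
    simp only [List.mem_cons, not_or] at hx
    rw [Perm.mul_apply, swap_apply_of_ne_of_ne hx.1 hx.2.1, h1]

theorem Cox.maps {L : List α} {u : Perm α} (h : Cox L u) {x : α} (hx : x ∈ L) : u x ∈ L := by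
  by_contra hc
  have h1 := h.fix _ hc
  have h2 := u.injective h1
  rw [h2] at hc
  exact hc hx

theorem Cox.append {L₁ L₂ : List α} {u₁ u₂ : Perm α} (h₁ : Cox L₁ u₁) (h₂ : Cox L₂ u₂)
    (hd : ∀ x ∈ L₁, x ∉ L₂) : Cox (L₁ ++ L₂) (u₁ * u₂) := by
  induction h₁ with
  | nil => simpa using h₂
  | single a =>
    rw [one_mul]
    cases L₂ with
    | nil => cases h₂; exact Cox.single a
    | cons b L => exact Cox.skip a b L _ h₂
  | skip a b L u _ ih =>
    exact Cox.skip a b _ _ (ih fun x hx => hd x (List.mem_cons_of_mem _ hx))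
  | left a b L u _ ih =>
    rw [mul_assoc]
    exact Cox.left a b _ _ (ih fun x hx => hd x (List.mem_cons_of_mem _ hx))
  | right a b L u _ ih =>
    have ha : u₂ a = a := h₂.fix _ (hd a (by simp))
    have hb : u₂ b = b := h₂.fix _ (hd b (by simp))
    have : u * swap a b * u₂ = (u * u₂) * swap a b := by
      rw [mul_assoc, mul_assoc, mul_swap_eq_swap_mul, ha, hb]
    rw [this]
    exact Cox.right a b _ _ (ih fun x hx => hd x (List.mem_cons_of_mem _ hx))

theorem Cox.formPerm (L : List α) : Cox L L.formPerm := by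
  induction L with
  | nil => exact Cox.nil
  | cons a L ih =>
    cases L with
    | nil => simpa using Cox.single a
    | cons b L => rw [List.formPerm_cons_cons]; exact Cox.left a b _ _ ih

theorem Cox.cycle (A B : List α) (hn : (A ++ B).Nodup) :
    Cox (B.reverse ++ A) (A ++ B).formPerm := by
  induction B using List.reverseRecOn with
  | nil => simpa using Cox.formPerm A
  | append_singleton B b ih =>
    rcases List.eq_nil_or_concat B with rfl | ⟨B, c, rfl⟩
    · cases A with
      | nil => simpa using Cox.single b
      | cons a A =>
        have h1 : (([] : List α) ++ [b]).reverse ++ a :: A = b :: a :: A := by simp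
        have h2 : (a :: A ++ ([] ++ [b])).formPerm = (b :: a :: A).formPerm := by
          have := List.formPerm_rotate_one (b :: a :: A) (by
            simp only [List.nil_append, List.nodup_append] at hn
            rw [List.nodup_cons]
            refine ⟨fun h => hn.2.2 b h b (by simp) rfl, hn.1⟩)
          simpa using this
        rw [h1, h2]
        exact Cox.formPerm _
    · have h1 : (B.concat c ++ [b]).reverse ++ A = b :: c :: (B.reverse ++ A) := by simp
      have h2 : A ++ (B.concat c ++ [b]) = (A ++ B) ++ [c, b] := by simp
      have h3 : A ++ B.concat c = (A ++ B) ++ [c] := by simp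
      rw [h1, h2, List.formPerm_append_pair, swap_comm c b]
      apply Cox.right
      have := ih (by
        rw [← List.append_assoc] at hn
        exact (List.nodup_append.1 hn).1)
      rw [h3] at this
      simpa using this

theorem Cox.toProd {L : List α} {u : Perm α} (h : Cox L u) :
    ∀ f : ℕ → α, (∀ (i : ℕ) (hi : i < L.length), f i = L[i]) →
      ∃ l : List ℕ, l.Nodup ∧ (∀ i ∈ l, i + 1 < L.length) ∧
        u = (l.map fun i => swap (f i) (f (i + 1))).prod := by
  induction h with
  | nil => intro f _; exact ⟨[], by simp⟩
  | single a => intro f _; exact ⟨[], by simp⟩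
  | skip a b L u _ ih =>
    intro f hf
    obtain ⟨l, h1, h2, h3⟩ := ih (fun i => f (i + 1)) (fun i hi => by
      have := hf (i + 1) (by simp at hi ⊢; omega)
      simpa using this)
    refine ⟨l.map Nat.succ, h1.map Nat.succ_injective, ?_, ?_⟩
    · intro i hi
      obtain ⟨j, hj, rfl⟩ := List.mem_map.1 hi
      have := h2 j hj
      simp at this ⊢; omega
    · rw [h3, List.map_map]; rfl
  | left a b L u _ ih =>
    intro f hf
    obtain ⟨l, h1, h2, h3⟩ := ih (fun i => f (i + 1)) (fun i hi => by
      have := hf (i + 1) (by simp at hi ⊢; omega)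
      simpa using this)
    have ha := hf 0 (by simp)
    have hb := hf 1 (by simp)
    simp at ha hb
    refine ⟨0 :: l.map Nat.succ, ?_, ?_, ?_⟩
    · rw [List.nodup_cons]
      exact ⟨by simp, h1.map Nat.succ_injective⟩
    · intro i hi
      rcases List.mem_cons.1 hi with rfl | hi
      · simp
      obtain ⟨j, hj, rfl⟩ := List.mem_map.1 hi
      have := h2 j hj
      simp at this ⊢; omega
    · rw [List.map_cons, List.prod_cons, h3, List.map_map, ha, hb]; rfl
  | right a b L u _ ih =>
    intro f hf
    obtain ⟨l, h1, h2, h3⟩ := ih (fun i => f (i + 1)) (fun i hi => by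
      have := hf (i + 1) (by simp at hi ⊢; omega)
      simpa using this)
    have ha := hf 0 (by simp)
    have hb := hf 1 (by simp)
    simp at ha hb
    refine ⟨l.map Nat.succ ++ [0], ?_, ?_, ?_⟩
    · rw [List.nodup_append]
      exact ⟨h1.map Nat.succ_injective, by simp, by simp⟩
    · intro i hi
      rcases List.mem_append.1 hi with hi | hi
      · obtain ⟨j, hj, rfl⟩ := List.mem_map.1 hi
        have := h2 j hj
        simp at this ⊢; omega
      · simp at hi; subst hi; simp
    · rw [List.map_append, List.prod_append, h3, List.map_map]
      simp [ha, hb]; rfl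

/-- The conclusion of the theorem. -/
def Concl (n : ℕ) (w : Perm (Fin n)) (lam : Fin n → ℤ) : Prop :=
  ∃ v : Equiv.Perm (Fin n),
      (∀ a b : Fin n, a < b → 0 ≤ ellF w lam (v a) (v b)) ∧
      ∃ l : List ℕ, l.Nodup ∧ (∀ i ∈ l, i + 1 < n) ∧
        v⁻¹ * w * v = (l.map (simpleT n)).prod

theorem concl_of_list {n : ℕ} (w : Perm (Fin n)) (lam : Fin n → ℤ) (L : List (Fin n))
    (hn : L.Nodup) (hall : ∀ x, x ∈ L) (hp : L.Pairwise fun a b => 0 ≤ ellF w lam a b)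
    (hc : Cox L w) : Concl n w lam := by
  have hlen : L.length = n := by
    have := List.toFinset_card_of_nodup hn
    rw [← this, Finset.eq_univ_of_forall (s := L.toFinset) (by simpa using hall)]
    simp
  let g : Fin n → Fin n := fun i => L[i.1]'(by rw [hlen]; exact i.2)
  have hg : Function.Injective g := by
    intro i j hij
    have := (List.Nodup.getElem_inj_iff hn).1 hij
    exact Fin.ext this
  let v : Perm (Fin n) := Equiv.ofBijective g (Finite.injective_iff_bijective.1 hg)
  have hv : ∀ i, v i = g i := fun i => rfl
  refine ⟨v, ?_, ?_⟩
  · intro a b hab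
    rw [hv, hv]
    exact List.pairwise_iff_getElem.1 hp a b _ _ hab
  · rcases Nat.eq_zero_or_pos n with rfl | hpos
    · exact ⟨[], by simp, by simp, by ext x; exact x.elim0⟩
    obtain ⟨l, h1, h2, h3⟩ := hc.toProd
      (fun i => if h : i < n then v ⟨i, h⟩ else v ⟨0, hpos⟩) (fun i hi => by
        have h : i < n := by omega
        simp [h, hv, g])
    refine ⟨l, h1, fun i hi => by have := h2 i hi; omega, ?_⟩
    have key : ∀ l : List ℕ, (∀ i ∈ l, i + 1 < n) → 
        v⁻¹ * (l.map fun i => swap ((fun i => if h : i < n then v ⟨i, h⟩ else v ⟨0, hpos⟩) i)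
          ((fun i => if h : i < n then v ⟨i, h⟩ else v ⟨0, hpos⟩) (i + 1))).prod * v
          = (l.map (simpleT n)).prod := by
      intro l
      induction l with
      | nil => simp
      | cons i l ih =>
        intro hl
        have hi := hl i (by simp)
        have hi' : i < n := by omega
        rw [List.map_cons, List.prod_cons, List.map_cons, List.prod_cons,
          ← ih (fun j hj => hl j (by simp [hj]))]
        have : simpleT n i = v⁻¹ * swap (v ⟨i, hi'⟩) (v ⟨i + 1, hi⟩) * v := by
          rw [simpleT, dif_pos hi, mul_assoc, ← mul_swap_eq_swap_mul]
          simp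
        rw [this]
        simp only [hi, hi', dif_pos]
        group
    have h4 := key l (fun i hi => by have := h2 i hi; omega)
    rw [← h4, ← h3]

/-- Lists closed under `w` on which `w` acts as a partial Coxeter element. -/
def Good (w : Perm α) (L : List α) : Prop := ∃ u, Cox L u ∧ ∀ x ∈ L, u x = w x

theorem Good.append {w : Perm α} {L₁ L₂ : List α} (h₁ : Good w L₁) (h₂ : Good w L₂)
    (hd : ∀ x ∈ L₁, x ∉ L₂) : Good w (L₁ ++ L₂) := by
  obtain ⟨u₁, c₁, e₁⟩ := h₁
  obtain ⟨u₂, c₂, e₂⟩ := h₂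
  refine ⟨u₁ * u₂, c₁.append c₂ hd, ?_⟩
  intro x hx
  rw [Perm.mul_apply]
  rcases List.mem_append.1 hx with hx | hx
  · rw [c₂.fix x (hd x hx), e₁ x hx]
  · rw [c₁.fix _ (fun h => hd _ h (c₂.maps hx)), e₂ x hx]

theorem Good.cox {w : Perm α} {L : List α} (h : Good w L) (hall : ∀ x, x ∈ L) : Cox L w := by
  obtain ⟨u, c, e⟩ := h
  have : u = w := Equiv.ext fun x => e x (hall x)
  rwa [← this]

/-- The cycle of `y` as a list ending in `y`. -/
theorem exists_cycle [Finite α] (w : Perm α) (y : α) :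
    ∃ T : List α, (T ++ [y]).Nodup ∧ (∀ x, x ∈ T ++ [y] ↔ w.SameCycle y x) ∧
      (∀ x ∈ T ++ [y], (T ++ [y]).formPerm x = w x) ∧
      (T ++ [y]).IsChain (fun a b => b = w a) := by
  have hpos : 0 < Function.minimalPeriod w y := by
    apply Function.IsPeriodicPt.minimalPeriod_pos (n := orderOf w) (orderOf_pos w)
    rw [Function.IsPeriodicPt, Function.IsFixedPt, ← Perm.coe_pow, pow_orderOf_eq_one]; rfl
  set k := Function.minimalPeriod w y with hk
  have hper : w^[k] y = y := Function.isPeriodicPt_minimalPeriod w y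
  have hinj : ∀ i j, i < k → j < k → w^[i + 1] y = w^[j + 1] y → i = j := by
    intro i j hi hj h
    rw [Function.iterate_succ_apply', Function.iterate_succ_apply'] at h
    have := w.injective h
    have h2 := (Function.iterate_eq_iterate_iff_of_lt_minimalPeriod hi hj).1 this
    exact h2
  let T' : List α := (List.range k).map fun i => w^[i + 1] y
  let T : List α := (List.range (k - 1)).map fun i => w^[i + 1] y
  have hT : T ++ [y] = T' := by
    have : k = (k - 1) + 1 := by omega
    simp only [T', T]
    conv_rhs => rw [this, List.range_succ, List.map_append]
    rw [List.map_singleton, ← this, hper]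
  have hnd : T'.Nodup := by
    apply List.Nodup.map_on _ List.nodup_range
    intro i hi j hj h
    exact hinj i j (List.mem_range.1 hi) (List.mem_range.1 hj) h
  refine ⟨T, ?_⟩
  rw [hT]
  refine ⟨hnd, ?_, ?_, ?_⟩
  · intro x
    constructor
    · intro hx
      obtain ⟨i, _, rfl⟩ := List.mem_map.1 hx
      refine ⟨(i + 1 : ℕ), ?_⟩
      rw [zpow_natCast, Perm.coe_pow]
    · rintro h
      obtain ⟨i, hi⟩ := h.exists_nat_pow_eq
      rw [Perm.coe_pow] at hi
      apply List.mem_map.2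
      have h1 : w^[i % k] y = x := by rw [← hi, hk, Function.iterate_mod_minimalPeriod_eq]
      by_cases h0 : i % k = 0
      · refine ⟨k - 1, List.mem_range.2 (by omega), ?_⟩
        rw [h0] at h1
        have : k - 1 + 1 = k := by omega
        rw [this, hper]; exact h1
      · refine ⟨i % k - 1, List.mem_range.2 ?_, ?_⟩
        · have := Nat.mod_lt i hpos; omega
        · have : i % k - 1 + 1 = i % k := by omega
          rw [this, h1]
  · intro x hx
    obtain ⟨i, hi, rfl⟩ := List.getElem_of_mem hx
    rw [List.formPerm_apply_getElem _ hnd]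
    have hlen : T'.length = k := by simp [T']
    simp only [T', List.getElem_map, List.getElem_range, List.length_map, List.length_range]
    rw [hlen] at hi
    rw [← Function.iterate_succ_apply' w]
    by_cases h : i + 1 = k
    · rw [h, Nat.mod_self]
      rw [Function.iterate_succ_apply (f := w) (n := k)]
      rw [zero_add, Function.iterate_one, ← Function.iterate_succ_apply w,
         Function.iterate_succ_apply' w, hper]
    · rw [Nat.mod_eq_of_lt (by omega)]
  · rw [List.isChain_iff_getElem]
    intro i hi
    simp only [T', List.getElem_map, List.getElem_range]
    rw [Function.iterate_succ_apply' w (i + 1)]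

theorem good_of_cycle {w : Perm α} {A B : List α} (hn : (A ++ B).Nodup)
    (hf : ∀ x ∈ A ++ B, (A ++ B).formPerm x = w x) : Good w (B.reverse ++ A) :=
  ⟨_, Cox.cycle A B hn, fun x hx => hf x (by simp at hx ⊢; tauto)⟩

theorem exists_rest [Fintype α] (w : Perm α) : ∀ (k : ℕ) (E : Finset α), (Eᶜ).card ≤ k →
    (∀ x y, w.SameCycle x y → x ∈ E → y ∈ E) →
    ∃ R : List α, R.Nodup ∧ (∀ x, x ∈ R ↔ x ∉ E) ∧ Good w R := by
  intro k
  induction k with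
  | zero =>
    intro E hE _
    refine ⟨[], by simp, ?_, ⟨1, Cox.nil, by simp⟩⟩
    intro x
    have : Eᶜ = ∅ := Finset.card_eq_zero.1 (by omega)
    have h2 : x ∉ Eᶜ := by rw [this]; simp
    simpa using h2
  | succ k ih =>
    intro E hE hc
    by_cases hex : ∃ y, y ∉ E
    · obtain ⟨y, hy⟩ := hex
      obtain ⟨T, hnd, hm, hf, -⟩ := exists_cycle w y
      set C := T ++ [y]
      have hdis : ∀ x ∈ C, x ∉ E := by
        intro x hx hxE
        exact hy (hc x y ((hm x).1 hx).symm hxE)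
      obtain ⟨R, h1, h2, h3⟩ := ih (E ∪ C.toFinset) (by
          have : (E ∪ C.toFinset)ᶜ ⊂ Eᶜ := by
            rw [Finset.ssubset_iff_of_subset (by intro x; simp; tauto)]
            exact ⟨y, by simpa using hy, by simp [C]⟩
          have := Finset.card_lt_card this
          omega) (by
          intro a b hab ha
          simp only [Finset.mem_union, List.mem_toFinset] at ha ⊢
          rcases ha with ha | ha
          · exact Or.inl (hc a b hab ha)
          · exact Or.inr ((hm b).2 (((hm a).1 ha).trans hab)))
      have hdis2 : ∀ x ∈ C, x ∉ R := by
        intro x hx hxR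
        have := (h2 x).1 hxR
        simp at this
        exact this.2 hx
      refine ⟨C ++ R, ?_, ?_, ?_⟩
      · rw [List.nodup_append]
        refine ⟨hnd, h1, ?_⟩
        rintro a ha b hb rfl
        exact hdis2 a ha hb
      · intro x
        rw [List.mem_append, h2]
        simp only [Finset.mem_union, List.mem_toFinset]
        constructor
        · rintro (h | h)
          · exact hdis x h
          · tauto
        · intro h; tauto
      · refine Good.append ?_ h3 hdis2
        have := good_of_cycle (w := w) (A := C) (B := []) (by simpa using hnd) (by simpa using hf)
        simpa using this
    · push Not at hex
      refine ⟨[], by simp, ?_, ⟨1, Cox.nil, by simp⟩⟩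
      intro x; simp [hex x]

theorem pw_of_forall {β : Type} {R : β → β → Prop} (l : List β)
    (h : ∀ a ∈ l, ∀ b ∈ l, R a b) : l.Pairwise R := by
  rw [List.pairwise_iff_getElem]
  intro i j hi hj _
  exact h _ (List.getElem_mem hi) _ (List.getElem_mem hj)

theorem Good.closed [Finite α] {w : Perm α} {L : List α} (h : Good w L) {x y : α} (hx : x ∈ L)
    (hxy : w.SameCycle x y) : y ∈ L := by
  obtain ⟨u, c, e⟩ := h
  obtain ⟨i, rfl⟩ := hxy.exists_nat_pow_eq
  clear hxy
  induction i with
  | zero => simpa using hx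
  | succ i ih =>
    rw [pow_succ', Perm.mul_apply, ← e _ ih]
    exact c.maps ih

theorem inv_of_closed [Finite α] {w : Perm α} (P : α → Prop) (hP : ∀ x, P x → P (w x)) {x y : α}
    (hx : P x) (hxy : w.SameCycle x y) : P y := by
  obtain ⟨i, rfl⟩ := hxy.exists_nat_pow_eq
  clear hxy
  induction i with
  | zero => simpa using hx
  | succ i ih =>
    rw [pow_succ', Perm.mul_apply]
    exact hP _ ih

theorem frame [Fintype α] (w : Perm α) (P Q : List α) (hP : P.Nodup) (hQ : Q.Nodup)
    (gP : Good w P) (gQ : Good w Q) (hd : ∀ x ∈ P, x ∉ Q) :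
    ∃ R : List α, (P ++ (R ++ Q)).Nodup ∧ (∀ x, x ∈ P ++ (R ++ Q)) ∧ Cox (P ++ (R ++ Q)) w ∧
      ∀ x ∈ R, x ∉ P ∧ x ∉ Q := by
  obtain ⟨R, h1, h2, h3⟩ := exists_rest w _ (P.toFinset ∪ Q.toFinset) le_rfl (by
    intro x y hxy hx
    simp only [Finset.mem_union, List.mem_toFinset] at hx ⊢
    exact hx.imp (fun h => gP.closed h hxy) (fun h => gQ.closed h hxy))
  have h2' : ∀ x, x ∈ R ↔ x ∉ P ∧ x ∉ Q := by
    intro x; rw [h2]; simp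
  have hall : ∀ x, x ∈ P ++ (R ++ Q) := by
    intro x
    simp only [List.mem_append, h2']
    tauto
  refine ⟨R, ?_, hall, ?_, fun x hx => (h2' x).1 hx⟩
  · rw [List.nodup_append, List.nodup_append]
    refine ⟨hP, ⟨h1, hQ, ?_⟩, ?_⟩
    · rintro a ha b hb rfl
      exact ((h2' a).1 ha).2 hb
    · rintro a ha b hb rfl
      rcases List.mem_append.1 hb with hb | hb
      · exact ((h2' a).1 hb).1 ha
      · exact hd a ha hb
  · apply Good.cox _ hall
    refine gP.append (h3.append gQ fun x hx => ((h2' x).1 hx).2) ?_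
    intro x hx hx2
    rcases List.mem_append.1 hx2 with hb | hb
    · exact ((h2' x).1 hb).1 hx
    · exact hd x hx hb

section counting
variable {N : ℕ} (w : Perm (Fin (N + 1))) (t : Fin (N + 1))

theorem cnt_ge (hmono : ∀ a b : Fin (N + 1), 0 < a → a < b → b < t → w a < w b) :
    ∀ (k : ℕ) (a : Fin (N + 1)), a.val = k → a < t → k ≤ (w a).val + 1 := by
  intro k
  induction k with
  | zero => intros; omega
  | succ k ih =>
    intro a ha hat
    by_cases hk : k = 0
    · omega
    · have hlt : k < N + 1 := by have := a.2; omega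
      have h1 : (⟨k, hlt⟩ : Fin (N + 1)) < a := by rw [Fin.lt_def]; simp; omega
      have h2 := ih ⟨k, hlt⟩ rfl (h1.trans hat)
      have h3 := hmono ⟨k, hlt⟩ a (by rw [Fin.lt_def]; simp; omega) h1 hat
      rw [Fin.lt_def] at h3
      omega

theorem trich
    (ht : t.val = N ∨ t.val + 1 = N) (x : Fin (N + 1)) (h0 : x ≠ 0) (h1 : x ≠ t) (h2 : x ≠ Fin.last N) :
    0 < x ∧ x < t := by
  have := x.2
  simp only [ne_eq, Fin.ext_iff, Fin.lt_def, Fin.val_last, Fin.val_zero] at *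
  omega

/-- If `w 0 < w t`, the interval below `w t` is stable. -/
theorem inv_low
    (ht : t.val = N ∨ t.val + 1 = N)
    (hmono : ∀ a b : Fin (N + 1), 0 < a → a < b → b < t → w a < w b)
    (hpq : w t ≤ w (Fin.last N)) (hr : w 0 < w t) (b : Fin (N + 1)) (hb : b < w t) : w b < w t := by
  by_contra hcon
  rw [not_lt] at hcon
  have hb0 : b ≠ 0 := by rintro rfl; exact absurd hr (not_lt.2 hcon)
  have hbt : b < t := by
    rcases eq_or_ne t (Fin.last N) with h | h
    · rw [h] at hb ⊢
      exact lt_of_lt_of_le hb (Fin.le_last _)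
    · have h1 : w t ≠ w (Fin.last N) := fun h' => h (w.injective h')
      have h2 := lt_of_le_of_ne hpq h1
      have h3 := (w (Fin.last N)).2
      have h4 : t.val ≠ N := fun h' => h (Fin.ext h')
      rw [Fin.lt_def] at *
      omega
  have hc : (Finset.Iio (w t)).card ≤ (Finset.Iio b).card := by
    apply Finset.card_le_card_of_injOn (fun y => w.symm y)
    · intro y hy
      simp only [Finset.coe_Iio, Set.mem_Iio] at hy ⊢
      set x := w.symm y with hx
      have hy' : w x = y := by simp [hx]
      rw [← hy'] at hy
      by_cases hx0 : x = 0
      · rw [hx0]; exact Fin.pos_of_ne_zero hb0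
      have := trich t ht x hx0 (by intro h; rw [h] at hy; exact lt_irrefl _ hy)
        (by intro h; rw [h] at hy; exact absurd hpq (not_le.2 hy))
      by_contra hxb
      rw [not_lt] at hxb
      rcases eq_or_lt_of_le hxb with h | h
      · rw [← h] at hy; exact absurd hcon (not_le.2 hy)
      · have := hmono b x (Fin.pos_of_ne_zero hb0) h this.2
        exact absurd (lt_of_le_of_lt hcon (this.trans hy)) (lt_irrefl _)
    · exact w.symm.injective.injOn
  rw [Fin.card_Iio, Fin.card_Iio] at hc
  rw [Fin.lt_def] at hb
  omega

theorem p_lt_t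
    (ht : t.val = N ∨ t.val + 1 = N)
    (ht0 : 0 < t)
    (hpq : w t ≤ w (Fin.last N)) (hr : w t < w 0) : w t < t := by
  have h1 : w 0 ≠ w (Fin.last N) := by
    intro h
    have := w.injective h
    rw [Fin.ext_iff] at this
    rw [Fin.lt_def] at ht0
    simp at this ht0
    omega
  have h2 : t.val + 1 = N → w t ≠ w (Fin.last N) := by
    intro h h'
    have := w.injective h'
    rw [Fin.ext_iff] at this
    simp at this
    omega
  have h3 := (w 0).2
  have h4 := (w (Fin.last N)).2
  simp only [ne_eq, Fin.ext_iff, Fin.lt_def, Fin.le_def] at *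
  omega

theorem desc
    (ht : t.val = N ∨ t.val + 1 = N)
    (ht0 : 0 < t)
    (hmono : ∀ a b : Fin (N + 1), 0 < a → a < b → b < t → w a < w b)
    (hpq : w t ≤ w (Fin.last N)) (hr : w t < w 0) (b : Fin (N + 1)) (hb0 : 0 < b) (hb : b ≤ w t) : w b < b := by
  have hp := p_lt_t w t ht ht0 hpq hr
  by_contra hcon
  rw [not_lt] at hcon
  have hc : (Finset.Iio b).card ≤ (Finset.Ioo 0 b).card := by
    apply Finset.card_le_card_of_injOn (fun y => w.symm y)
    · intro y hy
      simp only [Finset.coe_Iio, Set.mem_Iio, Finset.coe_Ioo, Set.mem_Ioo] at hy ⊢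
      set x := w.symm y with hx
      have hy' : w x = y := by simp [hx]
      rw [← hy'] at hy
      have hx3 := trich t ht x
        (by intro h; rw [h] at hy; exact absurd (hy.trans_le hb) (not_lt.2 hr.le))
        (by intro h; rw [h] at hy; exact absurd (hy.trans_le hb) (lt_irrefl _))
        (by intro h; rw [h] at hy; exact absurd (hy.trans_le hb) (not_lt.2 hpq))
      refine ⟨hx3.1, ?_⟩
      by_contra hxb
      rw [not_lt] at hxb
      rcases eq_or_lt_of_le hxb with h | h
      · rw [← h] at hy; exact absurd hcon (not_le.2 hy)
      · have := hmono b x hb0 h hx3.2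
        exact absurd (lt_of_le_of_lt hcon (this.trans hy)) (lt_irrefl _)
    · exact w.symm.injective.injOn
  rw [Fin.card_Iio, Fin.card_Ioo] at hc
  rw [Fin.lt_def] at hb0
  simp at hc hb0
  omega

theorem le_p
    (ht : t.val = N ∨ t.val + 1 = N)
    (hmono : ∀ a b : Fin (N + 1), 0 < a → a < b → b < t → w a < w b)
    (hpq : w t ≤ w (Fin.last N)) (a : Fin (N + 1)) (h0 : a ≠ 0) (ha : w a < w t) : a ≤ w t := by
  have h3 := trich t ht a h0 (by rintro rfl; exact lt_irrefl _ ha)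
    (by rintro rfl; exact absurd hpq (not_le.2 ha))
  have := cnt_ge w t hmono a.val a rfl h3.2
  rw [Fin.lt_def] at ha
  rw [Fin.le_def]
  omega

theorem incr
    (hmono : ∀ a b : Fin (N + 1), 0 < a → a < b → b < t → w a < w b) (hr : w t < w 0) (a : Fin (N + 1)) (h0 : 0 < a) (hat : a < t)
    (ha : w 0 < a ∨ w 0 < w a) : a < w a := by
  have h1 : w 0 < w a := by
    rcases ha with ha | ha
    · have := cnt_ge w t hmono a.val a rfl hat
      have hne : w 0 ≠ w a := fun h => (ne_of_gt h0) (w.injective h).symm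
      simp only [ne_eq, Fin.ext_iff, Fin.lt_def] at *
      omega
    · exact ha
  have hc : (insert t (Finset.Iio a)).card ≤ (Finset.Iio (w a)).card := by
    apply Finset.card_le_card_of_injOn (fun y => w y)
    · intro x hx
      simp only [Finset.coe_insert, Finset.coe_Iio, Set.mem_insert_iff, Set.mem_Iio] at hx ⊢
      rcases hx with rfl | hx
      · exact hr.trans h1
      · by_cases hx0 : x = 0
        · rw [hx0]; exact h1
        · exact hmono x a (Fin.pos_of_ne_zero hx0) hx hat
    · exact w.injective.injOn
  rw [Finset.card_insert_of_notMem (by simp; exact hat.le), Fin.card_Iio, Fin.card_Iio] at hc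
  rw [Fin.lt_def]
  omega

/-- `Frc b a`: `b` has to stand before `a`. -/
def Frc (b a : Fin (N + 1)) : Prop :=
  b = Fin.last N ∨ (a = 0 ∧ (b = t ∨ w 0 < w b)) ∨ (b = t ∧ w a < w t)

theorem chainD (P : Fin (N + 1) → Prop) (hP : ∀ a, a ≠ 0 → P a → P (w a)) :
    ∀ l : List (Fin (N + 1)), (∀ x ∈ l, x ≠ 0) → l.IsChain (fun a b => b = w a) →
      l.Pairwise fun a b => P a → P b := by
  intro l
  induction l with
  | nil => intros; exact List.Pairwise.nil
  | cons x l ih =>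
    intro h0 hc
    cases l with
    | nil => simp
    | cons y l =>
      rw [List.isChain_cons_cons] at hc
      have h1 := ih (fun z hz => h0 z (by simp [hz])) hc.2
      rw [List.pairwise_cons]
      refine ⟨?_, h1⟩
      intro b hb hx
      have hy : P y := by rw [hc.1]; exact hP x (h0 x (by simp)) hx
      rcases List.mem_cons.1 hb with rfl | hb
      · exact hy
      · exact (List.pairwise_cons.1 h1).1 b hb hy

theorem split_cycle
    (ht : t.val = N ∨ t.val + 1 = N)
    (ht0 : 0 < t)
    (hmono : ∀ a b : Fin (N + 1), 0 < a → a < b → b < t → w a < w b)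
    (hpq : w t ≤ w (Fin.last N)) (hr : w t < w 0) (y : Fin (N + 1)) (hy0 : w.SameCycle y 0)
    (hy : y = Fin.last N ∨ (y = t ∧ ¬ w.SameCycle t (Fin.last N))) :
    ∃ P : List (Fin (N + 1)), P.Nodup ∧ (∀ x, x ∈ P ↔ w.SameCycle y x) ∧ Good w P ∧
      P.Pairwise fun a b => ¬ Frc w t b a := by
  have hpt := p_lt_t w t ht ht0 hpq hr
  have hpN : w t < Fin.last N := hpt.trans_le (Fin.le_last t)
  have hyne : y ≠ 0 := by
    rcases hy with rfl | ⟨rfl, _⟩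
    · intro h; rw [h] at hpN; exact absurd hpN (by simp)
    · exact ne_of_gt ht0
  have hyD : ¬ y ≤ w t := by
    rcases hy with rfl | ⟨rfl, _⟩
    · exact not_le.2 hpN
    · exact not_le.2 hpt
  have hyw : ¬ w y < w t := by
    rcases hy with rfl | ⟨rfl, _⟩
    · exact not_lt.2 hpq
    · exact lt_irrefl _
  obtain ⟨T, hnd, hm, hf, hch⟩ := exists_cycle w y
  have h0T : (0 : Fin (N + 1)) ∈ T := by
    have := (hm 0).2 hy0
    rcases List.mem_append.1 this with h | h
    · exact h
    · simp at h; exact absurd h.symm hyne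
  obtain ⟨A, B, rfl⟩ := List.append_of_mem h0T
  have hEq : A ++ 0 :: B ++ [y] = (A ++ [0]) ++ (B ++ [y]) := by simp
  rw [hEq] at hnd hm hf hch
  have hgood := good_of_cycle hnd hf
  have hnd' : ((B ++ [y]).reverse ++ (A ++ [0])).Nodup := by
    rw [List.nodup_append] at hnd ⊢
    refine ⟨List.nodup_reverse.2 hnd.2.1, hnd.1, ?_⟩
    intro a ha b hb h
    exact hnd.2.2 b hb a (List.mem_reverse.1 ha) h.symm
  have hm' : ∀ x, x ∈ (B ++ [y]).reverse ++ (A ++ [0]) ↔ w.SameCycle y x := by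
    intro x; rw [← hm]; simp; tauto
  have hP : ∀ a, a ≠ 0 → a ≤ w t → w a ≤ w t := fun a ha h =>
    ((desc w t ht ht0 hmono hpq hr a (Fin.pos_of_ne_zero ha) h).trans_le h).le
  have hndA := (List.nodup_append.1 (List.nodup_append.1 hnd).1)
  have hA0 : ∀ x ∈ A, x ≠ 0 := fun x hx h => hndA.2.2 x hx 0 (by simp) h
  have hB0 : ∀ x ∈ B ++ [y], x ≠ 0 := fun x hx h =>
    (List.nodup_append.1 hnd).2.2 0 (by simp) x hx h.symm
  have hchA := chainD w (fun a => a ≤ w t) hP A hA0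
    (List.isChain_append.1 (List.isChain_append.1 hch).1).1
  have hchB := chainD w (fun a => a ≤ w t) hP (B ++ [y]) hB0 (List.isChain_append.1 hch).2.1
  have hBD : ∀ x ∈ B ++ [y], ¬ w x < w t := by
    intro x hx hlt
    have hxD := le_p w t ht hmono hpq x (hB0 x hx) hlt
    rcases List.mem_append.1 hx with h | h
    · exact hyD ((List.pairwise_append.1 hchB).2.2 x h y (by simp) hxD)
    · simp at h; subst h; exact hyw hlt
  have hNy : ∀ x, w.SameCycle y x → x = Fin.last N → x = y := by
    intro x hx h
    rcases hy with rfl | ⟨rfl, h2⟩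
    · exact h
    · rw [h] at hx; exact absurd hx h2
  refine ⟨_, hnd', hm', hgood, ?_⟩
  have hrev : (B ++ [y]).reverse ++ (A ++ [0]) = (y :: (B.reverse ++ A)) ++ [0] := by simp
  have h0last : ∀ a ∈ y :: (B.reverse ++ A), a ≠ 0 := by
    intro a ha
    rw [hrev, List.nodup_append] at hnd'
    exact fun h => hnd'.2.2 a ha 0 (by simp) h
  have hmem : ∀ a ∈ y :: (B.reverse ++ A), w.SameCycle y a := by
    intro a ha
    rw [← hm', hrev]; exact List.mem_append_left _ ha
  have hytail : ∀ b ∈ B.reverse ++ A, b ≠ y := by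
    intro b hb h
    rw [hrev, List.nodup_append] at hnd'
    exact (List.nodup_cons.1 hnd'.1).1 (h ▸ hb)
  rw [hrev, List.pairwise_append, List.pairwise_cons, List.pairwise_append]
  have gen : ∀ a b, a ≠ 0 → b ≠ y → w.SameCycle y b → ¬ (b = t ∧ w a < w t) → ¬ Frc w t b a := by
    rintro a b ha hb hs hh (h | h | h)
    · exact hb (hNy b hs h)
    · exact ha h.1
    · exact hh h
  refine ⟨⟨?_, ?_, ?_, ?_⟩, by simp, ?_⟩
  · intro b hb
    exact gen y b hyne (hytail b hb) (hmem b (by simp at hb ⊢; tauto)) (fun h => hyw h.2)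
  · apply pw_of_forall
    intro a ha b hb
    simp only [List.mem_reverse] at ha hb
    exact gen a b (hB0 a (by simp [ha])) (hytail b (by simp [hb])) (hmem b (by simp [hb]))
      (fun h => hBD a (by simp [ha]) h.2)
  · apply List.Pairwise.imp_of_mem _ hchA
    intro a b ha hb hab
    refine gen a b (hA0 a ha) (hytail b (by simp [hb])) (hmem b (by simp [hb])) ?_
    rintro ⟨rfl, h⟩
    exact absurd (hab (le_p w b ht hmono hpq a (hA0 a ha) h)) (not_le.2 hpt)
  · intro a ha b hb
    simp only [List.mem_reverse] at ha
    exact gen a b (hB0 a (by simp [ha])) (hytail b (by simp [hb])) (hmem b (by simp [hb]))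
      (fun h => hBD a (by simp [ha]) h.2)
  · intro a ha b hb
    simp only [List.mem_singleton] at hb
    subst hb
    exact gen a 0 (h0last a ha) hyne.symm hy0 (fun h => absurd h.1 (ne_of_lt ht0))

theorem plain_cycle (y : Fin (N + 1)) (hy : y = Fin.last N ∨ y = t)
    (hyN : w.SameCycle y (Fin.last N) → y = Fin.last N) (hpq : w t ≤ w (Fin.last N))
    (h0 : ¬ w.SameCycle y 0)
    (hlow : y ≠ t → ∀ a, w.SameCycle y a → ¬ w a < w t) :
    ∃ P : List (Fin (N + 1)), P.Nodup ∧ (∀ x, x ∈ P ↔ w.SameCycle y x) ∧ Good w P ∧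
      P.Pairwise fun a b => ¬ Frc w t b a := by
  obtain ⟨T, hnd, hm, hf, -⟩ := exists_cycle w y
  have hgood := good_of_cycle (w := w) (A := []) (B := T ++ [y]) (by simpa using hnd)
    (by simpa using hf)
  have hrev : (T ++ [y]).reverse ++ [] = y :: T.reverse := by simp
  rw [hrev] at hgood
  have hnd' : (y :: T.reverse).Nodup := by
    have := List.nodup_reverse.2 hnd
    simpa using this
  have hm' : ∀ x, x ∈ y :: T.reverse ↔ w.SameCycle y x := by
    intro x; rw [← hm]; simp; tauto
  refine ⟨_, hnd', hm', hgood, ?_⟩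
  have hne0 : ∀ a ∈ y :: T.reverse, a ≠ 0 := by
    rintro a ha rfl
    exact h0 ((hm' _).1 ha)
  have hny := (List.nodup_cons.1 hnd').1
  have gen : ∀ a ∈ y :: T.reverse, ∀ b ∈ T.reverse, ¬ Frc w t b a := by
    rintro a ha b hb (h | h | h)
    · apply hny
      have : w.SameCycle y (Fin.last N) := by
        rw [← h, ← hm']; exact List.mem_cons_of_mem _ hb
      rw [hyN this, ← h]; exact hb
    · exact hne0 a ha h.1
    · by_cases hyt : y = t
      · exact hny (by rw [hyt, ← h.1]; exact hb)
      · exact hlow hyt a ((hm' a).1 ha) h.2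
  rw [List.pairwise_cons]
  refine ⟨fun b hb => gen y (by simp) b hb, ?_⟩
  apply pw_of_forall
  intro a ha b hb
  exact gen a (List.mem_cons_of_mem _ ha) b hb

theorem main_list
    (ht : t.val = N ∨ t.val + 1 = N)
    (ht0 : 0 < t)
    (hmono : ∀ a b : Fin (N + 1), 0 < a → a < b → b < t → w a < w b)
    (hpq : w t ≤ w (Fin.last N)) : ∃ L : List (Fin (N + 1)), L.Nodup ∧ (∀ x, x ∈ L) ∧ Cox L w ∧
    L.Pairwise fun a b => ¬ Frc w t b a := by
  set lst := Fin.last N with hlst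
  have good_nil : Good w ([] : List (Fin (N + 1))) := ⟨1, Cox.nil, by simp⟩
  have ht0' : t ≠ 0 := ne_of_gt ht0
  have hN0 : lst ≠ 0 := by
    intro h
    have := Fin.le_last t
    rw [← hlst, h] at this
    exact absurd ht0 (not_lt.2 this)
  rcases lt_trichotomy (w 0) (w t) with hr | hr | hr
  · -- the element `0` lies in its own cycle, at the very end
    have hcl : ∀ x y, x < w t → w.SameCycle x y → y < w t := fun x y hx hxy =>
      inv_of_closed (fun x => x < w t) (fun x hx => inv_low w t ht hmono hpq hr x hx) hx hxy
    have h0p : (0 : Fin (N + 1)) < w t := lt_of_le_of_lt (Fin.zero_le _) hr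
    have htp : w t ≤ t := by
      by_contra h
      rw [not_le] at h
      exact absurd (hcl t (w t) h ⟨1, by simp⟩) (lt_irrefl _)
    have hNp : w t ≤ lst := Fin.le_last _
    have hNlow : ∀ a, w.SameCycle lst a → ¬ w a < w t := by
      intro a ha h
      exact absurd (hcl (w a) lst h ((ha.trans ⟨1, by simp⟩).symm)) (not_lt.2 hNp)
    have hN0' : ¬ w.SameCycle lst 0 := fun h => absurd (hcl 0 lst h0p h.symm) (not_lt.2 hNp)
    have ht0'' : ¬ w.SameCycle t 0 := fun h => absurd (hcl 0 t h0p h.symm) (not_lt.2 htp)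
    obtain ⟨P, p1, p2, p3, p4⟩ := plain_cycle w t lst (Or.inl rfl) (fun _ => rfl) hpq hN0'
      (fun _ => hNlow)
    obtain ⟨P₂, q1, q2, q3, q4, q5, q6⟩ : ∃ P₂ : List (Fin (N + 1)), P₂.Nodup ∧
        (∀ x ∈ P₂, w.SameCycle t x) ∧ Good w P₂ ∧
        (P₂.Pairwise fun a b => ¬ Frc w t b a) ∧ (∀ x ∈ P, x ∉ P₂) ∧ (t ∈ P ∨ t ∈ P₂) := by
      by_cases htN : w.SameCycle lst t
      · exact ⟨[], by simp, by simp, good_nil, by simp, by simp, Or.inl ((p2 t).2 htN)⟩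
      · obtain ⟨P₂, q1, q2, q3, q4⟩ := plain_cycle w t t (Or.inr rfl) (fun h => absurd h.symm htN)
          hpq ht0'' (fun h => absurd rfl h)
        refine ⟨P₂, q1, fun x hx => (q2 x).1 hx, q3, q4, ?_, Or.inr ((q2 t).2 (Perm.SameCycle.refl _ _))⟩
        intro x hx hx2
        exact htN (((p2 x).1 hx).trans ((q2 x).1 hx2).symm)
    obtain ⟨T, hnd, hm, hf, -⟩ := exists_cycle w (0 : Fin (N + 1))
    have gQ := good_of_cycle (w := w) (A := T ++ [0]) (B := []) (by simpa using hnd)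
      (by simpa using hf)
    simp only [List.reverse_nil, List.nil_append] at gQ
    have hPQ : ∀ x ∈ P ++ P₂, x ∉ T ++ [0] := by
      intro x hx hx2
      have h1 := (hm x).1 hx2
      rcases List.mem_append.1 hx with h | h
      · exact hN0' (((p2 x).1 h).trans h1.symm)
      · exact ht0'' ((q2 x h).trans h1.symm)
    obtain ⟨R, r1, r2, r3, r4⟩ := frame w (P ++ P₂) (T ++ [0])
      (List.nodup_append.2 ⟨p1, q1, by rintro a ha b hb rfl; exact q5 a ha hb⟩) hnd
      (p3.append q3 q5) gQ hPQ
    refine ⟨_, r1, r2, r3, ?_⟩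
    have hlP : lst ∈ P := (p2 _).2 (Perm.SameCycle.refl _ _)
    have tT : t ∉ T ++ [0] := fun h => ht0'' (((hm t).1 h).symm)
    have NT : lst ∉ T ++ [0] := fun h => hN0' (((hm _).1 h).symm)
    have tR : t ∉ R := by
      intro h
      have := (r4 t h).1
      rw [List.mem_append] at this
      exact this q6
    have NR : lst ∉ R := fun h => (r4 _ h).1 (List.mem_append_left _ hlP)
    have zP : ∀ a ∈ P ++ P₂, a ≠ 0 := by
      rintro a ha rfl
      exact hPQ 0 ha (by simp)
    have zR : ∀ a ∈ R, a ≠ 0 := by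
      rintro a ha rfl
      exact (r4 0 ha).2 (by simp)
    have zT : ∀ a ∈ T, a ≠ 0 := fun a ha h => (List.nodup_append.1 hnd).2.2 a ha 0 (by simp) h
    have gen : ∀ a b, a ≠ 0 → b ≠ lst → b ≠ t → ¬ Frc w t b a := by
      rintro a b h1 h2 h3 (h | h | h)
      · exact h2 h
      · exact h1 h.1
      · exact h3 h.1
    rw [List.pairwise_append, List.pairwise_append (l₁ := P), List.pairwise_append (l₁ := R),
      List.pairwise_append (l₁ := T)]
    refine ⟨⟨p4, q4, ?_⟩, ⟨?_, ⟨?_, by simp, ?_⟩, ?_⟩, ?_⟩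
    · rintro a ha b hb (h | h | h)
      · exact q5 _ hlP (by rw [hlst, ← h]; exact hb)
      · exact zP a (List.mem_append_left _ ha) h.1
      · exact hNlow a ((p2 a).1 ha) h.2
    · apply pw_of_forall
      intro a ha b hb
      exact gen a b (zR a ha) (fun h => NR (h ▸ hb)) (fun h => tR (h ▸ hb))
    · apply pw_of_forall
      intro a ha b hb
      exact gen a b (zT a ha) (fun h => NT (by rw [← h]; simp [hb])) (fun h => tT (by rw [← h]; simp [hb]))
    · intro a ha b hb
      exact gen a b (zT a ha) (fun h => NT (by rw [← h]; exact List.mem_append_right _ hb))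
        (fun h => tT (by rw [← h]; exact List.mem_append_right _ hb))
    · intro a ha b hb
      exact gen a b (zR a ha) (fun h => NT (h ▸ hb)) (fun h => tT (h ▸ hb))
    · intro a ha b hb
      rcases List.mem_append.1 hb with hb | hb
      · exact gen a b (zP a ha) (fun h => NR (h ▸ hb)) (fun h => tR (h ▸ hb))
      · exact gen a b (zP a ha) (fun h => NT (h ▸ hb)) (fun h => tT (h ▸ hb))
  · exact absurd (w.injective hr).symm ht0'
  · -- the element `0` lies in the cycle of `t`
    have toZero : ∀ (k : ℕ) (a : Fin (N + 1)), a.val = k → a ≤ w t → w.SameCycle a 0 := by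
      intro k
      induction k using Nat.strong_induction_on with
      | _ k ih =>
        intro a hak ha
        by_cases h0 : a = 0
        · rw [h0]
        · have h1 := desc w t ht ht0 hmono hpq hr a (Fin.pos_of_ne_zero h0) ha
          have h2 := ih (w a).val (by rw [Fin.lt_def] at h1; omega) (w a) rfl (h1.le.trans ha)
          exact Perm.SameCycle.trans ⟨1, by simp⟩ h2
    have htz : w.SameCycle t 0 :=
      Perm.SameCycle.trans ⟨1, by simp⟩ (toZero _ (w t) rfl le_rfl)
    have rest : ∀ b, ¬ w.SameCycle t b → ¬ w.SameCycle lst b → ¬ w 0 < w b := by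
      intro b hbt hbN hlt
      let C : Finset (Fin (N + 1)) := Finset.univ.filter fun x => w.SameCycle b x
      have hCne : C.Nonempty := ⟨b, by simp [C, Perm.SameCycle.refl]⟩
      set m := C.max' hCne with hm
      have hmC : w.SameCycle b m := by
        have := C.max'_mem hCne
        rw [← hm] at this
        simpa [C] using this
      have hmax : ∀ x, w.SameCycle b x → x ≤ m := fun x hx => C.le_max' x (by simpa [C] using hx)
      have h1 : w 0 < m := hlt.trans_le (hmax _ ⟨1, by simp⟩)
      have h3 := trich t ht m
        (by intro h; rw [h] at hmC; exact hbt (htz.trans hmC.symm))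
        (by intro h; rw [h] at hmC; exact hbt hmC.symm)
        (by intro h; rw [h] at hmC; exact hbN hmC.symm)
      have h4 := incr w t hmono hr m h3.1 h3.2 (Or.inl h1)
      exact absurd (hmax (w m) (hmC.trans ⟨1, by simp⟩)) (not_le.2 h4)
    -- it suffices to give the front part
    suffices hs : ∃ P : List (Fin (N + 1)), P.Nodup ∧ Good w P ∧ t ∈ P ∧ lst ∈ P ∧
        P.Pairwise fun a b => ¬ Frc w t b a by
      obtain ⟨P, p1, p2, p3, p4, p5⟩ := hs
      obtain ⟨R, r1, r2, r3, r4⟩ := frame w P [] p1 (by simp) p2 good_nil (by simp)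
      refine ⟨_, r1, r2, r3, ?_⟩
      have tR : t ∉ R := fun h => (r4 t h).1 p3
      have NR : lst ∉ R := fun h => (r4 _ h).1 p4
      have zP : (0 : Fin (N + 1)) ∈ P := p2.closed p3 htz
      rw [List.append_nil, List.pairwise_append]
      refine ⟨p5, ?_, ?_⟩
      · apply pw_of_forall
        rintro a ha b hb (h | h | h)
        · exact NR (by rw [hlst, ← h]; exact hb)
        · exact (r4 a ha).1 (h.1 ▸ zP)
        · exact tR (h.1 ▸ hb)
      · rintro a ha b hb (h | ⟨h1, h2 | h2⟩ | h)
        · exact NR (by rw [hlst, ← h]; exact hb)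
        · exact tR (h2 ▸ hb)
        · exact rest b (fun h => (r4 b hb).1 (p2.closed p3 h))
            (fun h => (r4 b hb).1 (p2.closed p4 h)) h2
        · exact tR (h.1 ▸ hb)
    by_cases htN : w.SameCycle lst t
    · obtain ⟨P, p1, p2, p3, p4⟩ := split_cycle w t ht ht0 hmono hpq hr lst (htN.trans htz)
        (Or.inl rfl)
      exact ⟨P, p1, p3, (p2 t).2 htN, (p2 _).2 (Perm.SameCycle.refl _ _), p4⟩
    · have hN0' : ¬ w.SameCycle lst 0 := fun h => htN (h.trans htz.symm)
      have hNlow : ∀ a, w.SameCycle lst a → ¬ w a < w t := by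
        intro a ha h
        by_cases h0 : a = 0
        · exact hN0' (h0 ▸ ha)
        · exact hN0' (ha.trans (toZero _ a rfl (le_p w t ht hmono hpq a h0 h)))
      obtain ⟨P, p1, p2, p3, p4⟩ := plain_cycle w t lst (Or.inl rfl) (fun _ => rfl) hpq hN0'
        (fun _ => hNlow)
      obtain ⟨P₂, q1, q2, q3, q4⟩ := split_cycle w t ht ht0 hmono hpq hr t htz
        (Or.inr ⟨rfl, fun h => htN h.symm⟩)
      have hd : ∀ x ∈ P, x ∉ P₂ := fun x hx hx2 =>
        htN (((p2 x).1 hx).trans ((q2 x).1 hx2).symm)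
      have hlP : lst ∈ P := (p2 _).2 (Perm.SameCycle.refl _ _)
      refine ⟨P ++ P₂, List.nodup_append.2 ⟨p1, q1, by rintro a ha b hb rfl; exact hd a ha hb⟩,
        p3.append q3 hd, List.mem_append_right _ ((q2 _).2 (Perm.SameCycle.refl _ _)),
        List.mem_append_left _ hlP, ?_⟩
      rw [List.pairwise_append]
      refine ⟨p4, q4, ?_⟩
      rintro a ha b hb (h | h | h)
      · exact hd _ hlP (by rw [hlst, ← h]; exact hb)
      · exact hN0' (h.1 ▸ (p2 a).1 ha)
      · exact hNlow a ((p2 a).1 ha) h.2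

end counting

theorem ellF_antisymm {n : ℕ} (w : Perm (Fin n)) (lam : Fin n → ℤ) (a b : Fin n) :
    ellF w lam a b = - ellF w lam b a := by
  unfold ellF
  rcases lt_trichotomy a b with h | h | h
  · have h1 : ¬ b < a := not_lt.2 h.le
    simp only [h, h1, true_and, false_and, if_false]
    split_ifs <;> omega
  · subst h; simp
  · have h1 : ¬ a < b := not_lt.2 h.le
    simp only [h, h1, true_and, false_and, if_false]
    split_ifs <;> omega

theorem ellF_lt {n : ℕ} (w : Perm (Fin n)) (lam : Fin n → ℤ) {a b : Fin n} (h : a < b) :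
    ellF w lam a b = lam a - lam b + if w b < w a then 1 else 0 := by
  have h1 : ¬ b < a := not_lt.2 h.le
  simp [ellF, h, h1]

theorem mono_of_min {n : ℕ} {w : Perm (Fin n)} {lam : Fin n → ℤ}
    (hmin : ∀ a b : Fin n, a < b → ellF w lam a b ≤ 0) {a b : Fin n} (h : a < b)
    (he : lam a = lam b) : w a < w b := by
  have h1 := hmin a b h
  rw [ellF_lt w lam h, he] at h1
  by_contra hc
  have h2 : w a ≠ w b := fun h' => (ne_of_lt h) (w.injective h')
  have : w b < w a := lt_of_le_of_ne (not_lt.1 hc) h2.symm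
  simp [this] at h1

theorem ell_nonneg {n : ℕ} {w : Perm (Fin n)} {lam : Fin n → ℤ}
    (hmin : ∀ a b : Fin n, a < b → ellF w lam a b ≤ 0) (a b : Fin n)
    (h : a < b → 0 ≤ lam a - lam b + if w b < w a then 1 else 0) : 0 ≤ ellF w lam a b := by
  rcases lt_trichotomy a b with hab | hab | hab
  · rw [ellF_lt w lam hab]; exact h hab
  · subst hab; simp [ellF]
  · rw [ellF_antisymm]
    have := hmin b a hab
    omega

theorem family {N : ℕ} (w : Perm (Fin (N + 1))) (lam : Fin (N + 1) → ℤ) (t : Fin (N + 1))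
    (ht : t.val = N ∨ t.val + 1 = N) (ht0 : 0 < t)
    (hmin : ∀ a b : Fin (N + 1), a < b → ellF w lam a b ≤ 0)
    (hmid : ∀ a, 0 < a → a < t → lam a = 0) (h0 : lam 0 = -1 ∨ lam 0 = 0)
    (hlt : t.val + 1 = N → lam t = 1 ∧ lam (Fin.last N) = 1) : Concl (N + 1) w lam := by
  have hpq : w t ≤ w (Fin.last N) := by
    rcases ht with h | h
    · have : t = Fin.last N := Fin.ext h
      rw [this]
    · apply le_of_lt
      apply mono_of_min hmin
      · rw [Fin.lt_def]; simp; omega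
      · rw [(hlt h).1, (hlt h).2]
  have hmono : ∀ a b : Fin (N + 1), 0 < a → a < b → b < t → w a < w b := by
    intro a b h1 h2 h3
    apply mono_of_min hmin h2
    rw [hmid a h1 (h2.trans h3), hmid b (h1.trans h2) h3]
  obtain ⟨L, l1, l2, l3, l4⟩ := main_list w t ht ht0 hmono hpq
  refine concl_of_list w lam L l1 l2 ?_ l3
  refine List.Pairwise.imp ?_ l4
  intro a b hF
  apply ell_nonneg hmin
  intro hab
  by_contra hneg
  apply hF
  by_cases hbN : b = Fin.last N
  · exact Or.inl hbN
  right
  have hb0 : b ≠ 0 := by rintro rfl; exact absurd hab (by simp)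
  have hwne : w a ≠ w b := fun h => (ne_of_lt hab) (w.injective h)
  by_cases hbt : b = t
  · by_cases ha0 : a = 0
    · exact Or.inl ⟨ha0, Or.inl hbt⟩
    · right
      refine ⟨hbt, ?_⟩
      rw [← hbt]
      have hla := hmid a (Fin.pos_of_ne_zero ha0) (hbt ▸ hab)
      have hb1 : t.val + 1 = N := by
        rcases ht with h | h
        · exact absurd (hbt.trans (Fin.ext h)) hbN
        · exact h
      have hlb : lam b = 1 := by rw [hbt]; exact (hlt hb1).1
      by_contra hc
      have : w b < w a := lt_of_le_of_ne (not_lt.1 hc) hwne.symm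
      rw [hla, hlb] at hneg
      simp [this] at hneg
  · have hb3 := trich t ht b hb0 hbt hbN
    have hlb := hmid b hb3.1 hb3.2
    by_cases ha0 : a = 0
    · left
      refine ⟨ha0, Or.inr ?_⟩
      rw [← ha0]
      by_contra hc
      have : w b < w a := lt_of_le_of_ne (not_lt.1 hc) hwne.symm
      rw [hlb, ha0] at hneg
      rw [ha0] at this
      rw [if_pos this] at hneg
      omega
    · have hla := hmid a (Fin.pos_of_ne_zero ha0) (hab.trans hb3.2)
      rw [hla, hlb] at hneg
      exfalso
      apply hneg
      split_ifs <;> simp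

/-- Decidable version of `Cox`. -/
def coxB {n : ℕ} : List (Fin n) → (Fin n → Fin n) → Bool
  | a :: b :: L, f =>
    if f a = a then coxB (b :: L) f
    else if f a = b then coxB (b :: L) (fun x => swap a b (f x))
    else if f b = a then coxB (b :: L) (fun x => f (swap a b x))
    else false
  | _, _ => true

theorem coxB_sound {n : ℕ} : ∀ (L : List (Fin n)) (w : Perm (Fin n)), (∀ x, x ∉ L → w x = x) →
    coxB L w = true → Cox L w := by
  intro L
  induction L with
  | nil =>
    intro w hw _
    have : w = 1 := Equiv.ext fun x => hw x (by simp)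
    rw [this]; exact Cox.nil
  | cons a L ih =>
    intro w hw hc
    cases L with
    | nil =>
      have : w = 1 := by
        have hne : ∀ x, x ≠ a → w x = x := fun x hx => hw x (by simpa using hx)
        refine Equiv.ext fun x => ?_
        by_cases hx : x = a
        · subst hx
          by_contra hcon
          exact hcon (w.injective (hne _ hcon))
        · exact hne x hx
      rw [this]; exact Cox.single a
    | cons b L =>
      rw [coxB] at hc
      split_ifs at hc with h1 h2 h3
      · refine Cox.skip a b L w (ih w ?_ hc)
        intro x hx
        by_cases hxa : x = a
        · rw [hxa, h1]
        · exact hw x (by simp at hx ⊢; tauto)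
      · have e : w = swap a b * (swap a b * w) := by rw [← mul_assoc, swap_mul_self, one_mul]
        rw [e]
        refine Cox.left a b L _ (ih (swap a b * w) ?_ hc)
        intro x hx
        rw [Perm.mul_apply]
        by_cases hxa : x = a
        · rw [hxa, h2, swap_apply_right]
        · rw [hw x (by simp at hx ⊢; tauto)]
          simp at hx
          exact swap_apply_of_ne_of_ne hxa hx.1
      · have e : w = (w * swap a b) * swap a b := by rw [mul_assoc, swap_mul_self, mul_one]
        rw [e]
        refine Cox.right a b L _ (ih (w * swap a b) ?_ hc)
        intro x hx
        rw [Perm.mul_apply]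
        by_cases hxa : x = a
        · rw [hxa, swap_apply_left, h3]
        · have hx' := hx
          simp at hx'
          rw [swap_apply_of_ne_of_ne hxa hx'.1]
          exact hw x (by simp at hx ⊢; tauto)

/-- A certificate for a single pair. -/
def Cert {n : ℕ} (lam : Fin n → ℤ) (f : Fin n → Fin n) (L : List (Fin n)) : Prop :=
  L.Nodup ∧ (∀ x, x ∈ L) ∧ coxB L f = true ∧
    L.Pairwise fun a b => a < b → 0 ≤ lam a - lam b + if f b < f a then 1 else 0

instance {n : ℕ} (lam : Fin n → ℤ) (f : Fin n → Fin n) (L : List (Fin n)) :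
    Decidable (Cert lam f L) := by unfold Cert; infer_instance

theorem concl_of_cert {n : ℕ} (w : Perm (Fin n)) (lam : Fin n → ℤ) (L : List (Fin n))
    (hmin : ∀ a b : Fin n, a < b → ellF w lam a b ≤ 0) (h : Cert lam w L) : Concl n w lam := by
  obtain ⟨h1, h2, h3, h4⟩ := h
  exact concl_of_list w lam L h1 h2 (h4.imp fun {a b} h => ell_nonneg hmin a b h)
    (coxB_sound L w (fun x hx => absurd (h2 x) hx) h3)

theorem sorted_eq {n : ℕ} (l : List (Fin n)) (P : Fin n → Prop) [DecidablePred P]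
    (hs : l.Pairwise (· < ·)) (hm : ∀ x, x ∈ l ↔ P x) :
    l = (List.finRange n).filter P := by
  have h2 : ((List.finRange n).filter P).Pairwise (· < ·) :=
    List.Pairwise.filter _ (List.pairwise_lt_finRange n)
  refine List.Perm.eq_of_pairwise (le := (· < ·)) ?_ hs h2 ?_
  · intro a b _ _ hab hba; exact absurd hab (not_lt.2 hba.le)
  · rw [List.perm_ext_iff_of_nodup (hs.imp fun h => ne_of_lt h) (h2.imp fun h => ne_of_lt h)]
    intro x; simp [hm]

/-- The exceptional vectors. -/
def lamS (n : ℕ) (l0 : ℤ) (i : Fin n) : ℤ :=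
  if i.val = 0 then l0 else if i.val + 3 < n then 0 else 1

/-- The word with given list of values, as a function. -/
def fW {n : ℕ} [NeZero n] (W : List (Fin n)) (i : Fin n) : Fin n := W.getD i.val 0

def cand4 : List (List (Fin 4)) := [[3, 2, 1, 0]]
def cand5 : List (List (Fin 5)) :=
  [[4, 3, 1, 2, 0], [4, 3, 2, 0, 1], [1, 3, 4, 2, 0], [2, 3, 4, 1, 0]]
def cand6 : List (List (Fin 6)) := [[5, 2, 4, 1, 3, 0], [5, 4, 3, 2, 1, 0], [1, 4, 2, 5, 0, 3]]
def cand7 : List (List (Fin 7)) := [[6, 3, 5, 2, 4, 1, 0], [6, 5, 4, 3, 2, 1, 0],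
  [6, 3, 1, 5, 2, 0, 4], [2, 5, 6, 3, 1, 4, 0]]
def cand8 : List (List (Fin 8)) := [[7, 4, 6, 3, 5, 2, 1, 0], [7, 4, 2, 6, 3, 1, 5, 0],
  [7, 6, 5, 4, 3, 2, 1, 0], [3, 6, 7, 4, 2, 5, 1, 0], [7, 4, 2, 0, 5, 3, 1, 6],
  [1, 4, 6, 3, 7, 0, 2, 5]]

theorem chk4 : ∀ r : Fin 4, ∃ L ∈ cand4,
    Cert (lamS 4 (-1)) (fW (r :: (List.finRange 4).filter fun x => x ≠ r)) L := by
  decide +kernel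

theorem chk5 : ∀ r p : Fin 5, r ≠ p → ∃ L ∈ cand5,
    Cert (lamS 5 (-1)) (fW (r :: p :: (List.finRange 5).filter fun x => x ≠ r ∧ x ≠ p)) L := by
  decide +kernel

theorem chk6 : ∀ p q s : Fin 6, p < q → q < s → ∃ L ∈ cand6,
    Cert (lamS 6 0)
      (fW (((List.finRange 6).filter fun x => x ≠ p ∧ x ≠ q ∧ x ≠ s) ++ [p, q, s])) L := by
  decide +kernel

theorem chk7 : ∀ p q s : Fin 7, p < q → q < s → ∃ L ∈ cand7,
    Cert (lamS 7 0)
      (fW (((List.finRange 7).filter fun x => x ≠ p ∧ x ≠ q ∧ x ≠ s) ++ [p, q, s])) L := by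
  decide +kernel

theorem chk8 : ∀ p q s : Fin 8, p < q → q < s → ∃ L ∈ cand8,
    Cert (lamS 8 0)
      (fW (((List.finRange 8).filter fun x => x ≠ p ∧ x ≠ q ∧ x ≠ s) ++ [p, q, s])) L := by
  decide +kernel

theorem ex_pre {n : ℕ} (w : Perm (Fin n)) (P Q : Fin n → Prop) (h : ∀ i, P i ∨ Q (w i)) (x : Fin n)
    (hx : ¬ Q x) : ∃ i, P i ∧ w i = x := by
  rcases h (w.symm x) with h' | h'
  · exact ⟨_, h', by simp⟩
  · simp at h'; exact absurd h' hx

theorem spor4 (w : Perm (Fin 4)) (hmin : ∀ a b : Fin 4, a < b → ellF w (lamS 4 (-1)) a b ≤ 0) :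
    Concl 4 w (lamS 4 (-1)) := by
  have h12 := mono_of_min hmin (a := 1) (b := 2) (by decide) (by decide)
  have h23 := mono_of_min hmin (a := 2) (b := 3) (by decide) (by decide)
  have e := sorted_eq [w 1, w 2, w 3] (fun x => x ≠ w 0)
    (by simp [h12, h23, h12.trans h23]) (by
      intro x
      obtain ⟨i, rfl⟩ := w.surjective x
      fin_cases i <;> simp)
  obtain ⟨L, -, hL⟩ := chk4 (w 0)
  rw [← e] at hL
  refine concl_of_cert w _ L hmin ?_
  convert hL using 1
  funext i; fin_cases i <;> rfl

theorem spor5 (w : Perm (Fin 5)) (hmin : ∀ a b : Fin 5, a < b → ellF w (lamS 5 (-1)) a b ≤ 0) :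
    Concl 5 w (lamS 5 (-1)) := by
  have h12 := mono_of_min hmin (a := 2) (b := 3) (by decide) (by decide)
  have h23 := mono_of_min hmin (a := 3) (b := 4) (by decide) (by decide)
  have e := sorted_eq [w 2, w 3, w 4] (fun x => x ≠ w 0 ∧ x ≠ w 1)
    (by simp [h12, h23, h12.trans h23]) (by
      intro x
      obtain ⟨i, rfl⟩ := w.surjective x
      fin_cases i <;> simp)
  obtain ⟨L, -, hL⟩ := chk5 (w 0) (w 1) (by simp)
  rw [← e] at hL
  refine concl_of_cert w _ L hmin ?_
  convert hL using 1
  funext i; fin_cases i <;> rfl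

theorem spor6 (w : Perm (Fin 6)) (hmin : ∀ a b : Fin 6, a < b → ellF w (lamS 6 0) a b ≤ 0) :
    Concl 6 w (lamS 6 0) := by
  have h0 := mono_of_min hmin (a := 0) (b := 1) (by decide) (by decide)
  have h1 := mono_of_min hmin (a := 1) (b := 2) (by decide) (by decide)
  have h3 := mono_of_min hmin (a := 3) (b := 4) (by decide) (by decide)
  have h4 := mono_of_min hmin (a := 4) (b := 5) (by decide) (by decide)
  have e := sorted_eq [w 0, w 1, w 2] (fun x => x ≠ w 3 ∧ x ≠ w 4 ∧ x ≠ w 5)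
    (by simp [h0, h1, h0.trans h1]) (by
      intro x
      obtain ⟨i, rfl⟩ := w.surjective x
      fin_cases i <;> simp)
  obtain ⟨L, -, hL⟩ := chk6 (w 3) (w 4) (w 5) h3 h4
  rw [← e] at hL
  refine concl_of_cert w _ L hmin ?_
  convert hL using 1
  funext i; fin_cases i <;> rfl

theorem spor7 (w : Perm (Fin 7)) (hmin : ∀ a b : Fin 7, a < b → ellF w (lamS 7 0) a b ≤ 0) :
    Concl 7 w (lamS 7 0) := by
  have h0 := mono_of_min hmin (a := 0) (b := 1) (by decide) (by decide)
  have h1 := mono_of_min hmin (a := 1) (b := 2) (by decide) (by decide)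
  have h2 := mono_of_min hmin (a := 2) (b := 3) (by decide) (by decide)
  have h4 := mono_of_min hmin (a := 4) (b := 5) (by decide) (by decide)
  have h5 := mono_of_min hmin (a := 5) (b := 6) (by decide) (by decide)
  have e := sorted_eq [w 0, w 1, w 2, w 3] (fun x => x ≠ w 4 ∧ x ≠ w 5 ∧ x ≠ w 6)
    (by simp [h0, h1, h2, h0.trans h1, h1.trans h2, (h0.trans h1).trans h2]) (by
      intro x
      obtain ⟨i, rfl⟩ := w.surjective x
      fin_cases i <;> simp)
  obtain ⟨L, -, hL⟩ := chk7 (w 4) (w 5) (w 6) h4 h5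
  rw [← e] at hL
  refine concl_of_cert w _ L hmin ?_
  convert hL using 1
  funext i; fin_cases i <;> rfl

theorem spor8 (w : Perm (Fin 8)) (hmin : ∀ a b : Fin 8, a < b → ellF w (lamS 8 0) a b ≤ 0) :
    Concl 8 w (lamS 8 0) := by
  have hm : ∀ a b : Fin 8, a < b → lamS 8 0 a = lamS 8 0 b → w a < w b := fun a b h h' =>
    mono_of_min hmin h h'
  have e := sorted_eq [w 0, w 1, w 2, w 3, w 4] (fun x => x ≠ w 5 ∧ x ≠ w 6 ∧ x ≠ w 7)
    (by
      simp only [List.pairwise_cons, List.mem_cons, forall_eq_or_imp, List.not_mem_nil,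
        IsEmpty.forall_iff, implies_true, and_true, List.Pairwise.nil]
      refine ⟨⟨?_, ?_, ?_, ?_⟩, ⟨?_, ?_, ?_⟩, ⟨?_, ?_⟩, ?_⟩ <;>
        exact hm _ _ (by decide) (by decide)) (by
      intro x
      obtain ⟨i, rfl⟩ := w.surjective x
      fin_cases i <;> simp)
  obtain ⟨L, -, hL⟩ := chk8 (w 5) (w 6) (w 7) (hm _ _ (by decide) (by decide))
    (hm _ _ (by decide) (by decide))
  rw [← e] at hL
  refine concl_of_cert w _ L hmin ?_
  convert hL using 1
  funext i; fin_cases i <;> rfl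

/-- Partial sums: successor step. -/
theorem psum_succ {n : ℕ} (lam : Fin n → ℤ) (k : ℕ) (hk : k < n) :
    psum lam (k + 1) = psum lam k + lam ⟨k, hk⟩ := by
  unfold psum
  have : Finset.univ.filter (fun i : Fin n => (i : ℕ) < k + 1)
      = insert ⟨k, hk⟩ (Finset.univ.filter (fun i : Fin n => (i : ℕ) < k)) := by
    ext i
    simp only [Finset.mem_filter, Finset.mem_univ, true_and, Finset.mem_insert, Fin.ext_iff]
    omega
  rw [this, Finset.sum_insert (by simp)]
  ring

theorem psum_zero {n : ℕ} (lam : Fin n → ℤ) : psum lam 0 = 0 := by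
  simp [psum]

theorem psum_full {n : ℕ} (lam : Fin n → ℤ) : psum lam n = ∑ a, lam a := by
  simp [psum]

theorem psum_sub {n : ℕ} (lam : Fin n → ℤ) (c : ℤ) (k : ℕ) (hk : k ≤ n) :
    psum (fun a => lam a - c) k = psum lam k - k * c := by
  induction k with
  | zero => simp [psum_zero]
  | succ k ih =>
    rw [psum_succ _ k hk, psum_succ _ k hk, ih (by omega)]
    push_cast; ring

theorem psum_rev {n : ℕ} (lam : Fin n → ℤ) (k : ℕ) (hk : k ≤ n) :
    psum (fun a => lam (Fin.rev a)) k = psum lam n - psum lam (n - k) := by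
  induction k with
  | zero => simp [psum_zero]
  | succ k ih =>
    rw [psum_succ _ k hk, ih (by omega)]
    have h1 := psum_succ lam (n - (k + 1)) (by omega)
    have h2 : n - (k + 1) + 1 = n - k := by omega
    rw [h2] at h1
    have h3 : Fin.rev (⟨k, hk⟩ : Fin n) = ⟨n - (k + 1), by omega⟩ := by
      ext; simp [Fin.rev]
    rw [h3]; linarith

theorem psum_dual {n : ℕ} (lam : Fin n → ℤ) (k : ℕ) (hk : k ≤ n) :
    psum (fun a => 1 - lam (Fin.rev a)) k = k - (psum lam n - psum lam (n - k)) := by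
  rw [← psum_rev lam k hk]
  induction k with
  | zero => simp [psum_zero]
  | succ k ih =>
    rw [psum_succ _ k hk, psum_succ _ k hk, ih (by omega)]
    push_cast; ring

theorem simpleT_rev (n i : ℕ) (hi : i + 1 < n) :
    (Fin.revPerm : Perm (Fin n)) * simpleT n i * Fin.revPerm = simpleT n (n - 2 - i) := by
  have hrr : (Fin.revPerm : Perm (Fin n)) = (Fin.revPerm : Perm (Fin n))⁻¹ := by
    ext x; rfl
  have h2 : n - 2 - i + 1 < n := by omega
  unfold simpleT
  rw [dif_pos hi, dif_pos h2]
  have key : ∀ s : Perm (Fin n), Fin.revPerm * s * Fin.revPerm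
      = Fin.revPerm * s * (Fin.revPerm : Perm (Fin n))⁻¹ := fun s => by rw [← hrr]
  rw [key]
  rw [← Equiv.swap_apply_apply, Equiv.swap_comm]
  congr 1 <;> (ext; simp [Fin.rev]; omega)

theorem prod_rev (n : ℕ) (l : List ℕ) (hl : ∀ i ∈ l, i + 1 < n) :
    (Fin.revPerm : Perm (Fin n)) * (l.map (simpleT n)).prod * Fin.revPerm
      = ((l.map (fun i => n - 2 - i)).map (simpleT n)).prod := by
  have hrr : (Fin.revPerm : Perm (Fin n)) * Fin.revPerm = 1 := by
    ext x; simp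
  induction l with
  | nil => simp [hrr]
  | cons i l ih =>
    have h1 := ih (fun j hj => hl j (List.mem_cons_of_mem _ hj))
    simp only [List.map_cons, List.prod_cons]
    rw [← h1, ← simpleT_rev n i (hl i (by simp))]
    calc _ = (Fin.revPerm : Perm (Fin n)) * simpleT n i * 1 * (l.map (simpleT n)).prod
            * Fin.revPerm := by group
      _ = _ := by rw [← hrr]; group

/-- The dual data. -/
theorem ellF_dual {n : ℕ} (w : Perm (Fin n)) (lam : Fin n → ℤ) (a b : Fin n) :
    ellF (Fin.revPerm * w * Fin.revPerm) (fun a => 1 - lam (Fin.rev a)) a b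
      = ellF w lam (Fin.rev b) (Fin.rev a) := by
  unfold ellF
  simp only [Perm.mul_apply, Fin.revPerm_apply, Fin.rev_lt_rev]
  ring

theorem dual_concl {n : ℕ} (w : Perm (Fin n)) (lam : Fin n → ℤ)
    (h : Concl n (Fin.revPerm * w * Fin.revPerm) (fun a => 1 - lam (Fin.rev a))) :
    Concl n w lam := by
  obtain ⟨v, hv, l, hnd, hl, hp⟩ := h
  have hrr : (Fin.revPerm : Perm (Fin n)) * Fin.revPerm = 1 := by
    ext x; simp
  have hri : (Fin.revPerm : Perm (Fin n))⁻¹ = Fin.revPerm := by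
    ext x; rfl
  refine ⟨Fin.revPerm * v * Fin.revPerm, ?_, l.map (fun i => n - 2 - i), ?_, ?_, ?_⟩
  · intro a b hab
    have := hv (Fin.rev b) (Fin.rev a) (Fin.rev_lt_rev.2 hab)
    rw [ellF_dual] at this
    simpa [Perm.mul_apply] using this
  · refine List.Nodup.map_on ?_ hnd
    intro x hx y hy hxy
    have := hl x hx
    have := hl y hy
    omega
  · intro i hi
    rw [List.mem_map] at hi
    obtain ⟨j, hj, rfl⟩ := hi
    have := hl j hj
    omega
  · rw [← prod_rev n l hl, ← hp]
    simp only [mul_inv_rev, hri]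
    group

theorem shift_concl {n : ℕ} (w : Perm (Fin n)) (lam : Fin n → ℤ) (c : ℤ)
    (h : Concl n w (fun a => lam a - c)) : Concl n w lam := by
  have he : ∀ a b, ellF w (fun a => lam a - c) a b = ellF w lam a b := by
    intro a b; unfold ellF; ring
  obtain ⟨v, hv, h2⟩ := h
  exact ⟨v, fun a b hab => by rw [← he]; exact hv a b hab, h2⟩

theorem mono_lam {n : ℕ} {w : Perm (Fin n)} {lam : Fin n → ℤ}
    (hmin : ∀ a b : Fin n, a < b → ellF w lam a b ≤ 0) {a b : Fin n} (h : a ≤ b) :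
    lam a ≤ lam b := by
  rcases h.lt_or_eq with h | h
  · have := hmin a b h
    rw [ellF_lt w lam h] at this
    split_ifs at this <;> omega
  · rw [h]

theorem core {N : ℕ} (hN : 1 ≤ N) (w : Perm (Fin (N + 1))) (lam : Fin (N + 1) → ℤ)
    (hmin : ∀ a b : Fin (N + 1), a < b → ellF w lam a b ≤ 0) (S : ℤ)
    (hS : psum lam (N + 1) = S) (hS0 : 0 ≤ S) (hS2 : 2 * S ≤ (N + 1 : ℤ))
    (H : ∀ k : ℕ, k ≤ N + 1 → (k : ℤ) * S < 2 * (N + 1) + (N + 1) * psum lam k) :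
    Concl (N + 1) w lam := by
  have hnpos : (0 : ℤ) < N + 1 := by positivity
  have T : ∀ j : ℕ, j ≤ N + 1 → 2 * (S - psum lam (N + 1 - j)) < 4 + j := by
    intro j hj
    have h1 := H (N + 1 - j) (by omega)
    rw [Nat.cast_sub hj] at h1
    push_cast at h1
    have h2 : (j : ℤ) * (2 * S) ≤ j * (N + 1) := mul_le_mul_of_nonneg_left hS2 (by positivity)
    refine lt_of_mul_lt_mul_left (a := (N + 1 : ℤ)) ?_ hnpos.le
    nlinarith
  have p1 : psum lam 1 = lam 0 := by
    have := psum_succ lam 0 (by omega)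
    rw [psum_zero] at this
    simpa using this
  have l0 : -1 ≤ lam 0 := by
    have h1 := H 1 (by omega)
    rw [p1] at h1
    push_cast at h1
    by_contra hc
    nlinarith
  have l1 : 0 ≤ lam ⟨1, by omega⟩ := by
    have h1 := H 2 (by omega)
    have h2 := psum_succ lam 1 (by omega)
    have h3 : lam 0 ≤ lam ⟨1, by omega⟩ := mono_lam hmin (Fin.zero_le _)
    norm_num at h2
    rw [h2, p1] at h1
    push_cast at h1
    by_contra hc
    nlinarith
  have lpos : ∀ a : Fin (N + 1), 0 < a → 0 ≤ lam a := by
    intro a ha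
    refine l1.trans (mono_lam hmin ?_)
    rw [Fin.le_def]; rw [Fin.lt_def] at ha; simp at ha ⊢; omega
  have s1 := psum_succ lam N (by omega)
  have s2 := psum_succ lam (N - 1) (by omega)
  rw [Nat.sub_add_cancel hN] at s2
  have t1 := T 1 (by omega)
  have t2 := T 2 (by omega)
  rw [show N + 1 - 2 = N - 1 by omega] at t2
  push_cast at t1 t2
  have m1 : lam ⟨N - 1, by omega⟩ ≤ lam ⟨N, by omega⟩ := mono_lam hmin (by simp)
  by_cases c1 : lam ⟨N - 1, by omega⟩ ≤ 0
  · have hle : ∀ a : Fin (N + 1), a < Fin.last N → lam a ≤ 0 := by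
      intro a ha
      refine (mono_lam hmin ?_).trans c1
      rw [Fin.le_def]; rw [Fin.lt_def] at ha; simp at ha ⊢; omega
    have h00 := hle 0 (by rw [Fin.lt_def]; simp; omega)
    refine family w lam (Fin.last N) (Or.inl rfl) ?_ hmin ?_ ?_ ?_
    · rw [Fin.lt_def]; simp; omega
    · intro a ha hb
      exact le_antisymm (hle a hb) (lpos a ha)
    · omega
    · intro h; simp at h
  have e1 : lam ⟨N - 1, by omega⟩ = 1 := by omega
  have e0 : lam ⟨N, by omega⟩ = 1 := by omega
  have hN2 : 2 ≤ N := by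
    by_contra hc
    have z : psum lam (N - 1) = 0 := by
      rw [show N - 1 = 0 by omega, psum_zero]
    omega
  have s3 := psum_succ lam (N - 2) (by omega)
  rw [show N - 2 + 1 = N - 1 by omega] at s3
  have m2 : lam ⟨N - 2, by omega⟩ ≤ lam ⟨N - 1, by omega⟩ :=
    mono_lam hmin (by rw [Fin.le_def]; simp; omega)
  by_cases c2 : lam ⟨N - 2, by omega⟩ ≤ 0
  · have hle : ∀ a : Fin (N + 1), a < ⟨N - 1, by omega⟩ → lam a ≤ 0 := by
      intro a ha
      refine (mono_lam hmin ?_).trans c2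
      rw [Fin.le_def]; rw [Fin.lt_def] at ha; simp at ha ⊢; omega
    have h00 := hle 0 (by rw [Fin.lt_def]; simp; omega)
    refine family w lam ⟨N - 1, by omega⟩ (Or.inr (by simp; omega)) ?_ hmin ?_ ?_ ?_
    · rw [Fin.lt_def]; simp; omega
    · intro a ha hb
      exact le_antisymm (hle a hb) (lpos a ha)
    · omega
    · intro h; exact ⟨e1, e0⟩
  have e2 : lam ⟨N - 2, by omega⟩ = 1 := by omega
  have hN3 : 3 ≤ N := by
    by_contra hc
    have z : psum lam (N - 2) = 0 := by
      rw [show N - 2 = 0 by omega, psum_zero]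
    omega
  have s4 := psum_succ lam (N - 3) (by omega)
  rw [show N - 3 + 1 = N - 2 by omega] at s4
  have t4 := T 4 (by omega)
  rw [show N + 1 - 4 = N - 3 by omega] at t4
  push_cast at t4
  have c3 : lam ⟨N - 3, by omega⟩ ≤ 0 := by omega
  have hle : ∀ a : Fin (N + 1), a.val ≤ N - 3 → lam a ≤ 0 := by
    intro a ha
    refine (mono_lam hmin ?_).trans c3
    rw [Fin.le_def]; exact ha
  have h00 := hle 0 (by simp)
  have hlam : lam = lamS (N + 1) (lam 0) := by
    funext a
    unfold lamS
    split_ifs with h1 h2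
    · congr 1; ext; simpa using h1
    · exact le_antisymm (hle a (by omega)) (lpos a (by
        rw [Fin.lt_def, Fin.val_zero]; omega))
    · have ha := a.2
      have : a = ⟨N, by omega⟩ ∨ a = ⟨N - 1, by omega⟩ ∨ a = ⟨N - 2, by omega⟩ := by
        simp only [Fin.ext_iff]; omega
      rcases this with h | h | h <;> rw [h] <;> assumption
  have hP : ∀ k : ℕ, k + 1 ≤ N - 2 → psum lam (k + 1) = lam 0 := by
    intro k
    induction k with
    | zero => intro _; exact p1
    | succ k ih =>
      intro hk
      rw [psum_succ lam (k + 1) (by omega), ih (by omega)]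
      have h1 := hle ⟨k + 1, by omega⟩ (by simp; omega)
      have h2 := lpos ⟨k + 1, by omega⟩ (by rw [Fin.lt_def]; simp)
      omega
  have hP2 := hP (N - 3) (by omega)
  rw [show N - 3 + 1 = N - 2 by omega] at hP2
  have hSv : S = lam 0 + 3 := by omega
  have h3 := H (N - 2) (by omega)
  rw [hP2, Nat.cast_sub hN2, hSv] at h3
  push_cast at h3
  have hb : (N : ℤ) + 1 < 3 * (lam 0 + 3) := by nlinarith
  rw [hSv] at hS2
  rw [hlam] at hmin ⊢
  have hcase : lam 0 = -1 ∨ lam 0 = 0 := by omega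
  rcases hcase with h | h
  · rw [h] at hmin hb hS2 ⊢
    have : N = 3 ∨ N = 4 := by omega
    rcases this with rfl | rfl
    · exact spor4 w hmin
    · exact spor5 w hmin
  · rw [h] at hmin hb hS2 ⊢
    have : N = 5 ∨ N = 6 ∨ N = 7 := by omega
    rcases this with rfl | rfl | rfl
    · exact spor6 w hmin
    · exact spor7 w hmin
    · exact spor8 w hmin

theorem core_dual {N : ℕ} (hN : 1 ≤ N) (w : Perm (Fin (N + 1))) (lam : Fin (N + 1) → ℤ)
    (hmin : ∀ a b : Fin (N + 1), a < b → ellF w lam a b ≤ 0) (S : ℤ)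
    (hS : psum lam (N + 1) = S) (hS0 : 0 ≤ S) (hS1 : S < (N + 1 : ℤ))
    (H : ∀ k : ℕ, k ≤ N + 1 → (k : ℤ) * S < 2 * (N + 1) + (N + 1) * psum lam k) :
    Concl (N + 1) w lam := by
  by_cases hc : 2 * S ≤ (N + 1 : ℤ)
  · exact core hN w lam hmin S hS hS0 hc H
  apply dual_concl
  refine core hN _ _ ?_ (N + 1 - S) ?_ (by omega) (by omega) ?_
  · intro a b hab
    rw [ellF_dual]
    exact hmin _ _ (Fin.rev_lt_rev.2 hab)
  · rw [psum_dual _ _ le_rfl, hS, Nat.sub_self, psum_zero]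
    push_cast; ring
  · intro k hk
    rw [psum_dual _ _ hk, hS]
    have h1 := H (N + 1 - k) (by omega)
    rw [Nat.cast_sub hk] at h1
    push_cast at h1
    nlinarith

theorem final {N : ℕ} (hN : 1 ≤ N) (w : Perm (Fin (N + 1))) (lam : Fin (N + 1) → ℤ)
    (hmin : ∀ a b : Fin (N + 1), a < b → ellF w lam a b ≤ 0)
    (H : ∀ k : ℕ, k ≤ N + 1 →
      (k : ℤ) * psum lam (N + 1) < 2 * (N + 1) + (N + 1) * psum lam k) :
    Concl (N + 1) w lam := by
  have hnpos : (0 : ℤ) < N + 1 := by positivity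
  set S := psum lam (N + 1) with hS
  apply shift_concl w lam (S / (N + 1))
  have hd := Int.emod_add_mul_ediv S (N + 1)
  refine core_dual hN w _ ?_ (S % (N + 1)) ?_ (Int.emod_nonneg _ hnpos.ne')
    (Int.emod_lt_of_pos _ hnpos) ?_
  · intro a b hab
    have := hmin a b hab
    unfold ellF at this ⊢
    linarith
  · rw [psum_sub _ _ _ le_rfl, ← hS]
    push_cast
    linarith
  · intro k hk
    rw [psum_sub _ _ _ hk]
    have h1 := H k hk
    have h2 : S % (N + 1) = S - (N + 1) * (S / (N + 1)) := by linarith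
    rw [h2]
    nlinarith
end PC

theorem stmt10 (n : ℕ) (hn : 2 ≤ n) (μ : Fin n → ℤ) (hμ : Antitone μ)
    (hdepth : depth μ < 2)
    (w : Equiv.Perm (Fin n)) (lam : Fin n → ℤ)
    (hperm : Permissible μ w lam)
    (hmin : ∀ a b : Fin n, a < b → ellF w lam a b ≤ 0) :
    ∃ v : Equiv.Perm (Fin n),
      (∀ a b : Fin n, a < b → 0 ≤ ellF w lam (v a) (v b)) ∧
      ∃ l : List ℕ, l.Nodup ∧ (∀ i ∈ l, i + 1 < n) ∧
        v⁻¹ * w * v = (l.map (simpleT n)).prod := by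
  obtain ⟨N, rfl⟩ : ∃ N, n = N + 1 := ⟨n - 1, by omega⟩
  change PC.Concl (N + 1) w lam
  have hN : 1 ≤ N := by omega
  have hnpos : (0 : ℚ) < (N : ℚ) + 1 := by positivity
  have hnz : (0 : ℤ) < (N : ℤ) + 1 := by positivity
  refine PC.final hN w lam hmin ?_
  obtain ⟨hsum, hp⟩ := hperm
  have hS : psum μ (N + 1) = psum lam (N + 1) := by
    rw [PC.psum_full, PC.psum_full, hsum]
  have hle : ∀ j : ℕ, psum (fun a => lam (Fin.rev a)) j ≤ psum μ j := by
    refine hp (N + 1) (by omega) le_rfl _ Fin.revPerm ?_ ?_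
    · intro a
      have h1 := (w (Fin.rev a)).2
      have h2 := (Fin.rev a).2
      simp only [muI, Fin.revPerm_apply]
      rw [if_pos h1, if_pos h2]
      ring
    · intro a b hab
      exact PC.mono_lam hmin (Fin.rev_le_rev.2 hab)
  intro k hk
  rcases Nat.eq_zero_or_pos k with rfl | hk0
  · rw [PC.psum_zero]; push_cast; linarith
  rcases hk.lt_or_eq with hk1 | rfl
  swap
  · push_cast; linarith
  have hne : (Finset.Icc 1 (N + 1 - 1)).Nonempty := ⟨1, by simp; omega⟩
  unfold depth at hdepth
  rw [dif_pos hne, Finset.sup'_lt_iff] at hdepth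
  have h1 := hdepth (N + 1 - k) (by simp; omega)
  have h2 := hle (N + 1 - k)
  rw [PC.psum_rev _ _ (by omega), show N + 1 - (N + 1 - k) = k by omega] at h2
  rw [hS, Nat.cast_sub hk] at h1
  push_cast at h1
  have h3 : (psum μ (N + 1 - k) : ℚ) * (N + 1) - (N + 1 - k) * (psum lam (N + 1) : ℚ)
      < 2 * (N + 1) := by
    have := mul_lt_mul_of_pos_right h1 hnpos
    have e : ((psum μ (N + 1 - k) : ℚ) - ((N : ℚ) + 1 - k) / (N + 1) * (psum lam (N + 1) : ℚ))
        * (N + 1)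
        = (psum μ (N + 1 - k) : ℚ) * (N + 1) - (N + 1 - k) * (psum lam (N + 1) : ℚ) := by
      field_simp
    rw [e] at this
    exact this
  have h4 : psum μ (N + 1 - k) * ((N : ℤ) + 1) - (N + 1 - k) * psum lam (N + 1)
      < 2 * (N + 1) := by exact_mod_cast h3
  have h5 := mul_le_mul_of_nonneg_right h2 hnz.le
  linarith
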